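/- arXiv:2510.01813 — 4 statements merged into one kernel-verified Lean document; each statement's English description precedes it below -/
import Mathlib

section
/- (Proposition 1) Let y ∈ ℝ^N, σ > 0, ℓ_i = 2|y_i|/σ², and let C ⊆ F_2^N be a nonempty code. Let e(1), e(2), …, e(2^N) be a bijective enumeration of F_2^N such that ζ(e(1)) ≤ ζ(e(2)) ≤ … ≤ ζ(e(2^N)), and let t* be the least index t with θ(y) ⊕ e(t) ∈ C. Then θ(y) ⊕ e(t*) is a maximum-likelihood codeword: for every w ∈ C, ∏_{i=1}^N p(y_i | (θ(y) ⊕ e(t*))_i) ≥ ∏_{i=1}^N p(y_i | w_i). -/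
open scoped BigOperators

/-- Channel output density for antipodal signaling over AWGN:
`p(y | w) = (2πσ²)^{−1/2} exp(−(y − (−1)^w)² / (2σ²))`. -/
noncomputable def chanP (σ y : ℝ) (w : ZMod 2) : ℝ :=
  (Real.sqrt (2 * Real.pi * σ ^ 2))⁻¹ *
    Real.exp (-(y - (if w = 0 then 1 else -1)) ^ 2 / (2 * σ ^ 2))

/-- Hard decision: `θ(y) = 0` if `y ≥ 0`, else `1`. -/
noncomputable def hardDec (y : ℝ) : ZMod 2 := if 0 ≤ y then 0 else 1

/-- Soft weight of an error pattern: `ζ(e) = Σ_{i : e_i = 1} ℓ_i`. -/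
noncomputable def zeta {N : ℕ} (ℓ : Fin N → ℝ) (e : Fin N → ZMod 2) : ℝ :=
  ∑ i, if e i = 1 then ℓ i else 0

/-!
Measured from the hard decision, the channel only sees `|y|`: the decided symbol is at distance
`||y| - 1|` from the output and the opposite one at distance `|y| + 1`. As
`(|y| + 1)² - (|y| - 1)² = 4 |y|`, flipping one decided bit multiplies its likelihood by
`exp (-2 |y| / σ²)`. The likelihood of `θ(y) ⊕ e` is therefore that of `θ(y)` times `exp (-ζ(e))`,
so maximizing likelihood over a code is minimizing soft weight over the error patterns that lead
into it.
-/

theorem chanP_pos {σ : ℝ} (hσ : σ ≠ 0) (y : ℝ) (w : ZMod 2) : 0 < chanP σ y w := by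
  unfold chanP
  positivity

theorem chanP_hardDec (σ y : ℝ) :
    chanP σ y (hardDec y) =
      (Real.sqrt (2 * Real.pi * σ ^ 2))⁻¹ * Real.exp (-(|y| - 1) ^ 2 / (2 * σ ^ 2)) := by
  rcases le_or_gt 0 y with hy | hy
  · simp [chanP, hardDec, hy, abs_of_nonneg hy]
  · have hsq : (y + 1) ^ 2 = (-y - 1) ^ 2 := by ring
    simp [chanP, hardDec, hy.not_ge, abs_of_neg hy, hsq]

theorem chanP_hardDec_add_one (σ y : ℝ) :
    chanP σ y (hardDec y + 1) =
      (Real.sqrt (2 * Real.pi * σ ^ 2))⁻¹ * Real.exp (-(|y| + 1) ^ 2 / (2 * σ ^ 2)) := by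
  rcases le_or_gt 0 y with hy | hy
  · simp [chanP, hardDec, hy, abs_of_nonneg hy]
  · have hsq : (y - 1) ^ 2 = (-y + 1) ^ 2 := by ring
    simp [chanP, hardDec, hy.not_ge, abs_of_neg hy, hsq, CharTwo.add_self_eq_zero]

theorem chanP_hardDec_add_one_eq_mul_exp (σ y : ℝ) :
    chanP σ y (hardDec y + 1) = chanP σ y (hardDec y) * Real.exp (-(2 * |y| / σ ^ 2)) := by
  have hexponent : -(|y| + 1) ^ 2 / (2 * σ ^ 2) =
      -(|y| - 1) ^ 2 / (2 * σ ^ 2) + -(2 * |y| / σ ^ 2) := by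
    ring
  rw [chanP_hardDec_add_one, chanP_hardDec, hexponent, Real.exp_add, ← mul_assoc]

theorem chanP_hardDec_add (σ y : ℝ) (e : ZMod 2) :
    chanP σ y (hardDec y + e) =
      chanP σ y (hardDec y) * Real.exp (-(if e = 1 then 2 * |y| / σ ^ 2 else 0)) := by
  obtain rfl | rfl : e = 0 ∨ e = 1 := by decide +revert
  · simp
  · rw [if_pos rfl, chanP_hardDec_add_one_eq_mul_exp]

section Likelihood

variable {N : ℕ} {σ : ℝ} {y ℓ : Fin N → ℝ}

theorem prod_chanP_hardDec_add (hℓ : ∀ i, ℓ i = 2 * |y i| / σ ^ 2) (e : Fin N → ZMod 2) :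
    ∏ i, chanP σ (y i) (((fun i => hardDec (y i)) + e) i) =
      (∏ i, chanP σ (y i) (hardDec (y i))) * Real.exp (-zeta ℓ e) := by
  simp only [Pi.add_apply, chanP_hardDec_add, ← hℓ, Finset.prod_mul_distrib, zeta,
    ← Finset.sum_neg_distrib, Real.exp_sum]

theorem prod_chanP_hardDec_add_le_iff (hσ : σ ≠ 0) (hℓ : ∀ i, ℓ i = 2 * |y i| / σ ^ 2)
    (e e' : Fin N → ZMod 2) :
    ∏ i, chanP σ (y i) (((fun i => hardDec (y i)) + e) i) ≤
        ∏ i, chanP σ (y i) (((fun i => hardDec (y i)) + e') i) ↔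
      zeta ℓ e' ≤ zeta ℓ e := by
  have hpos : 0 < ∏ i, chanP σ (y i) (hardDec (y i)) :=
    Finset.prod_pos fun i _ => chanP_pos hσ _ _
  rw [prod_chanP_hardDec_add hℓ, prod_chanP_hardDec_add hℓ, mul_le_mul_iff_right₀ hpos,
    Real.exp_le_exp, neg_le_neg_iff]

theorem stmt3_general {ι : Type*} [Preorder ι] (hσ : σ ≠ 0)
    (hℓ : ∀ i, ℓ i = 2 * |y i| / σ ^ 2) {C : Set (Fin N → ZMod 2)}
    {E : ι → Fin N → ZMod 2} (hsurj : Function.Surjective E)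
    (hmono : Monotone fun t => zeta ℓ (E t)) {tstar : ι}
    (hleast : ∀ t, (fun i => hardDec (y i)) + E t ∈ C → tstar ≤ t) :
    ∀ w ∈ C, (∏ i, chanP σ (y i) (w i)) ≤
      ∏ i, chanP σ (y i) (((fun i => hardDec (y i)) + E tstar) i) := by
  intro w hw
  obtain ⟨t, rfl⟩ : ∃ t, (fun i => hardDec (y i)) + E t = w :=
    (AddGroup.addLeft_bijective _).surjective.comp hsurj w
  exact (prod_chanP_hardDec_add_le_iff hσ hℓ _ _).2 (hmono (hleast t hw))

end Likelihood

/-- Proposition 1: if `e(1), …, e(2^N)` bijectively enumerates `F₂^N`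
in nondecreasing order of soft weight and `t*` is the least index with
`θ(y) ⊕ e(t) ∈ C`, then `θ(y) ⊕ e(t*)` is a maximum-likelihood codeword. -/
theorem stmt3 {N : ℕ} (σ : ℝ) (hσ : 0 < σ) (y ℓ : Fin N → ℝ)
    (hℓ : ∀ i, ℓ i = 2 * |y i| / σ ^ 2)
    (C : Set (Fin N → ZMod 2)) (hC : C.Nonempty)
    (E : Fin (2 ^ N) → (Fin N → ZMod 2)) (hbij : Function.Bijective E)
    (hord : ∀ s t : Fin (2 ^ N), s ≤ t → zeta ℓ (E s) ≤ zeta ℓ (E t))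
    (tstar : Fin (2 ^ N))
    (hvalid : (fun i => hardDec (y i)) + E tstar ∈ C)
    (hleast : ∀ t : Fin (2 ^ N), (fun i => hardDec (y i)) + E t ∈ C → tstar ≤ t) :
    ∀ w ∈ C, (∏ i, chanP σ (y i) (w i)) ≤
      ∏ i, chanP σ (y i) (((fun i => hardDec (y i)) + E tstar) i) :=
  stmt3_general hσ.ne' hℓ hbij.surjective (fun s t hst => hord s t hst) hleast
end

section
/- Assume ℓ_i ≥ 0 for all i and ℓ_{r_1} ≤ ℓ_{r_2} ≤ … ≤ ℓ_{r_N}. If e' is a child of e in the EP tree, then ζ(e) ≤ ζ(e'); moreover if e' is the right child of a nonzero e and ℓ_{r_{j*(e)+1}} > 0, then ζ(e) < ζ(e'). -/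
open scoped BigOperators

/-- `j*(e)`: the (1-indexed) largest position `j` with `e_{r_j} = 1`; `j*(0) = 0`. -/
def jstar {N : ℕ} (r : Equiv.Perm (Fin N)) (e : Fin N → ZMod 2) : ℕ :=
  (Finset.univ.filter fun j : Fin N => e (r j) = 1).sup fun j => (j : ℕ) + 1

/-- The child relation of the EP tree on `F₂^N`: the root `0` has a single child
(the vector with a `1` in coordinate `r_1`); a nonzero `e` with `j*(e) < N` has a
left child (coordinate `r_{j*}` set to `0`, coordinate `r_{j*+1}` set to `1`) and a
right child (coordinate `r_{j*+1}` set to `1`); a node with `j*(e) = N` has no children. -/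
def Child {N : ℕ} (r : Equiv.Perm (Fin N)) (e c : Fin N → ZMod 2) : Prop :=
  (e = 0 ∧ ∃ h : 0 < N,
    c = Function.update (0 : Fin N → ZMod 2) (r ⟨0, h⟩) 1) ∨
  (e ≠ 0 ∧ ∃ h : jstar r e < N,
    c = Function.update
        (Function.update e (r ⟨jstar r e - 1, lt_of_le_of_lt (Nat.sub_le _ _) h⟩) 0)
        (r ⟨jstar r e, h⟩) 1 ∨
    c = Function.update e (r ⟨jstar r e, h⟩) 1)

/-!
A right child, like the child of the root, switches on a coordinate where `e` vanishes, so it adds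
one reliability to the soft weight. A left child moves the last `1` of `e` one position further
along `r`, so it replaces one reliability by the next one in the sorted order.
-/

section Support

variable {N : ℕ} {r : Equiv.Perm (Fin N)} {e : Fin N → ZMod 2}

theorem lt_jstar_of_apply_eq_one {j : Fin N} (h : e (r j) = 1) : (j : ℕ) < jstar r e :=
  Finset.le_sup (f := fun j : Fin N => (j : ℕ) + 1) (Finset.mem_filter_univ j |>.2 h)

theorem apply_jstar_ne_one (hj : jstar r e < N) : e (r ⟨jstar r e, hj⟩) ≠ 1 :=
  fun h => (lt_jstar_of_apply_eq_one h).false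

theorem exists_jstar_eq_add_one (he : e ≠ 0) :
    ∃ j : Fin N, e (r j) = 1 ∧ jstar r e = j + 1 := by
  obtain ⟨i, hi⟩ := Function.ne_iff.1 he
  have hone : e (r (r.symm i)) = 1 := by
    rw [r.apply_symm_apply]
    exact Fin.eq_one_of_ne_zero _ hi
  have hsupport : (Finset.univ.filter fun j : Fin N => e (r j) = 1).Nonempty :=
    ⟨r.symm i, Finset.mem_filter_univ _ |>.2 hone⟩
  obtain ⟨j, hj, hsup⟩ := Finset.exists_mem_eq_sup _ hsupport fun j => (j : ℕ) + 1
  exact ⟨j, Finset.mem_filter_univ j |>.1 hj, hsup⟩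

theorem apply_jstar_sub_one_eq_one (he : e ≠ 0) (hj : jstar r e - 1 < N) :
    e (r ⟨jstar r e - 1, hj⟩) = 1 := by
  obtain ⟨j, hone, hjstar⟩ := exists_jstar_eq_add_one (r := r) he
  have hlast : (⟨jstar r e - 1, hj⟩ : Fin N) = j := Fin.ext (by simp [hjstar])
  rwa [hlast]

end Support

section SoftWeight

variable {N : ℕ} (ℓ : Fin N → ℝ) {e : Fin N → ZMod 2} {i k : Fin N}

theorem zeta_update (e : Fin N → ZMod 2) (i : Fin N) (v : ZMod 2) :
    zeta ℓ (Function.update e i v) =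
      zeta ℓ e - (if e i = 1 then ℓ i else 0) + (if v = 1 then ℓ i else 0) := by
  have hupdate := Function.apply_update (fun k (x : ZMod 2) => if x = 1 then ℓ k else 0) e i v
  simp only [zeta, hupdate, Finset.sum_update_of_mem (Finset.mem_univ i)]
  rw [Finset.sum_eq_add_sum_sdiff_singleton_of_mem (Finset.mem_univ i) fun k =>
    if e k = 1 then ℓ k else 0]
  ring

theorem zeta_update_one (hi : e i ≠ 1) : zeta ℓ (Function.update e i 1) = zeta ℓ e + ℓ i := by
  simp [zeta_update, hi]

theorem zeta_update_zero (hi : e i = 1) : zeta ℓ (Function.update e i 0) = zeta ℓ e - ℓ i := by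
  simp [zeta_update, hi]

theorem zeta_update_zero_update_one (hi : e i = 1) (hk : e k ≠ 1) :
    zeta ℓ (Function.update (Function.update e i 0) k 1) = zeta ℓ e - ℓ i + ℓ k := by
  have hki : k ≠ i := fun h => hk (h ▸ hi)
  have hk' : Function.update e i 0 k ≠ 1 := by rwa [Function.update_of_ne hki]
  rw [zeta_update_one ℓ hk', zeta_update_zero ℓ hi]

variable {ℓ}

theorem zeta_le_update_one (hi : e i ≠ 1) (hℓ : 0 ≤ ℓ i) :
    zeta ℓ e ≤ zeta ℓ (Function.update e i 1) := by
  rw [zeta_update_one ℓ hi]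
  exact le_add_of_nonneg_right hℓ

theorem zeta_lt_update_one (hi : e i ≠ 1) (hℓ : 0 < ℓ i) :
    zeta ℓ e < zeta ℓ (Function.update e i 1) := by
  rw [zeta_update_one ℓ hi]
  exact lt_add_of_pos_right _ hℓ

theorem zeta_le_update_zero_update_one (hi : e i = 1) (hk : e k ≠ 1) (hℓ : ℓ i ≤ ℓ k) :
    zeta ℓ e ≤ zeta ℓ (Function.update (Function.update e i 0) k 1) := by
  rw [zeta_update_zero_update_one ℓ hi hk]
  linarith

end SoftWeight

/-- with nonnegative reliabilities sorted along `r`, if `e'` is a child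
of `e` then `ζ(e) ≤ ζ(e')`; moreover if `e'` is the right child of a nonzero `e` and
`ℓ_{r_{j*(e)+1}} > 0`, then `ζ(e) < ζ(e')`. -/
theorem stmt5 {N : ℕ} (r : Equiv.Perm (Fin N)) (ℓ : Fin N → ℝ)
    (hnn : ∀ i, 0 ≤ ℓ i)
    (hsorted : ∀ i j : Fin N, i ≤ j → ℓ (r i) ≤ ℓ (r j))
    (e e' : Fin N → ZMod 2) (hchild : Child r e e') :
    zeta ℓ e ≤ zeta ℓ e' ∧
    (e ≠ 0 → ∀ (hj : jstar r e < N),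
      e' = Function.update e (r ⟨jstar r e, hj⟩) 1 →
      0 < ℓ (r ⟨jstar r e, hj⟩) →
      zeta ℓ e < zeta ℓ e') := by
  constructor
  · rcases hchild with ⟨rfl, _, rfl⟩ | ⟨he, hj, rfl | rfl⟩
    · exact zeta_le_update_one zero_ne_one (hnn _)
    · exact zeta_le_update_zero_update_one (apply_jstar_sub_one_eq_one he _)
        (apply_jstar_ne_one hj) (hsorted _ _ (Fin.mk_le_mk.2 (Nat.sub_le _ _)))
    · exact zeta_le_update_one (apply_jstar_ne_one hj) (hnn _)
  · rintro - hj rfl hpos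
    exact zeta_lt_update_one (apply_jstar_ne_one hj) hpos
end

section
/- Every nonzero e ∈ F_2^N is the child of exactly one vector in the EP tree; that is, there exists a unique e^P ∈ F_2^N such that e is a child of e^P. -/
open scoped BigOperators

/-!
In the coordinates `f = e ∘ r`, the two children of a vector with last `1` at position `m` differ
only in the entry at `m`, and both have their last `1` at the position `l` following `m`. Hence a
vector with last `1` at `l` recovers its parent: erase the entry at `l` and put a `1` at `m`,
while a vector whose last `1` is at the first position can only be the child of `0`.
-/

open Function

theorem zmod_two_ne_zero_iff (a : ZMod 2) : a ≠ 0 ↔ a = 1 := by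
  revert a
  decide

section LinearOrder

variable {ι : Type*} [LinearOrder ι] {f g : ι → ZMod 2} {k l m : ι}

/-- The child relation of the EP tree in the coordinates `f = e ∘ r`, for an arbitrary linearly
ordered set of positions: the position `j*` is the greatest element of the support, and `j* + 1` is
the position covering it. -/
def PositionChild (f g : ι → ZMod 2) : Prop :=
  (f = 0 ∧ ∃ b, IsBot b ∧ g = Pi.single b 1) ∨
    ∃ m l, m ⋖ l ∧ IsGreatest (support f) m ∧
      (g = update (update f m 0) l 1 ∨ g = update f l 1)

theorem isGreatest_support_iff :
    IsGreatest (support f) k ↔ f k = 1 ∧ ∀ j, k < j → f j = 0 := by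
  refine and_congr (zmod_two_ne_zero_iff _) (forall_congr' fun j ↦ ?_)
  rw [mem_support, ← not_lt, not_imp_not]

theorem exists_isGreatest_support [WellFoundedGT ι] (hf : f ≠ 0) :
    ∃ k, IsGreatest (support f) k := by
  obtain ⟨k, hk, hmax⟩ :=
    WellFounded.has_min (wellFounded_gt (α := ι)) _ (support_nonempty_iff.2 hf)
  exact ⟨k, hk, fun j hj ↦ not_lt.1 (hmax j hj)⟩

theorem eq_single_iff_isGreatest_support (hk : IsBot k) :
    g = Pi.single k 1 ↔ IsGreatest (support g) k := by
  rw [isGreatest_support_iff, Pi.single, eq_update_iff]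
  refine and_congr_right' (forall_congr' fun j ↦ ?_)
  rw [(hk j).lt_iff_ne', Pi.zero_apply]

theorem isGreatest_support_update_one (hf : ∀ j, k < j → f j = 0) :
    IsGreatest (support (update f k 1)) k := by
  rw [isGreatest_support_iff]
  exact ⟨update_self .., fun j hj ↦ by rw [update_of_ne hj.ne', hf j hj]⟩

theorem update_zero_apply_eq_zero_of_covBy (hml : m ⋖ l) (hg : IsGreatest (support g) l)
    {j : ι} (hj : m < j) : update g l 0 j = 0 := by
  obtain rfl | hlj := (hml.ge_of_gt hj).eq_or_lt
  · exact update_self ..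
  · rw [update_of_ne hlj.ne', (isGreatest_support_iff.1 hg).2 j hlj]

theorem isGreatest_support_and_eq_update_of_child (hml : m ⋖ l) (hf : IsGreatest (support f) m)
    (hg : g = update (update f m 0) l 1 ∨ g = update f l 1) :
    IsGreatest (support g) l ∧ f = update (update g l 0) m 1 := by
  obtain ⟨hfm, hf0⟩ := isGreatest_support_iff.1 hf
  have update_m : update f m 1 = f := update_eq_self_iff.2 hfm.symm
  have update_l : update f l 0 = f := update_eq_self_iff.2 (hf0 l hml.lt).symm
  rcases hg with rfl | rfl
  · refine ⟨isGreatest_support_update_one fun j hj ↦ ?_, ?_⟩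
    · rw [update_of_ne (hml.lt.trans hj).ne', hf0 j (hml.lt.trans hj)]
    · rw [update_idem, update_comm hml.lt.ne, update_idem, update_l, update_m]
  · refine ⟨isGreatest_support_update_one fun j hj ↦ hf0 j (hml.lt.trans hj), ?_⟩
    rw [update_idem, update_l, update_m]

theorem isGreatest_support_and_child_of_eq_update (hml : m ⋖ l) (hg : IsGreatest (support g) l)
    (hf : f = update (update g l 0) m 1) :
    IsGreatest (support f) m ∧ (g = update (update f m 0) l 1 ∨ g = update f l 1) := by
  subst hf
  refine ⟨isGreatest_support_update_one fun j ↦ update_zero_apply_eq_zero_of_covBy hml hg, ?_⟩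
  have update_l : update g l 1 = g := update_eq_self_iff.2 (isGreatest_support_iff.1 hg).1.symm
  by_cases hgm : g m = 0
  · have update_m : update g m 0 = g := update_eq_self_iff.2 hgm.symm
    left
    rw [update_idem, update_comm hml.lt.ne', update_idem, update_m, update_l]
  · have update_m : update g m 1 = g :=
      update_eq_self_iff.2 ((zmod_two_ne_zero_iff _).1 hgm).symm
    right
    rw [update_comm hml.lt.ne', update_idem, update_m, update_l]

theorem positionChild_iff_of_isGreatest (hg : IsGreatest (support g) k) :
    PositionChild f g ↔
      (f = 0 ∧ IsBot k) ∨ ∃ m, m ⋖ k ∧ f = update (update g k 0) m 1 := by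
  refine or_congr (and_congr_right' ?_) (exists_congr fun m ↦ ?_)
  · constructor
    · rintro ⟨b, hb, hgb⟩
      rwa [hg.unique ((eq_single_iff_isGreatest_support hb).1 hgb)]
    · exact fun hk ↦ ⟨k, hk, (eq_single_iff_isGreatest_support hk).2 hg⟩
  · constructor
    · rintro ⟨l, hml, hfm, hchild⟩
      obtain ⟨hgl, hf⟩ := isGreatest_support_and_eq_update_of_child hml hfm hchild
      obtain rfl := hg.unique hgl
      exact ⟨hml, hf⟩
    · rintro ⟨hmk, hf⟩
      exact ⟨k, hmk, isGreatest_support_and_child_of_eq_update hmk hg hf⟩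

theorem stmt7_general [WellFoundedGT ι] (hg : g ≠ 0) : ∃! f, PositionChild f g := by
  obtain ⟨k, hk⟩ := exists_isGreatest_support hg
  simp only [positionChild_iff_of_isGreatest hk]
  by_cases hbot : IsBot k
  · have not_covBy (m : ι) : ¬m ⋖ k := fun hmk ↦ hmk.lt.not_ge (hbot m)
    simp [hbot, not_covBy]
  · obtain ⟨m, hmk⟩ := exists_covBy_of_wellFoundedGT (mt IsMin.isBot hbot)
    have covBy_iff (m' : ι) : m' ⋖ k ↔ m' = m := ⟨fun h ↦ h.unique_left hmk, fun h ↦ h ▸ hmk⟩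
    simp [hbot, covBy_iff]

end LinearOrder

section Permutation

variable {N : ℕ} {r : Equiv.Perm (Fin N)} {p c : Fin N → ZMod 2} {m : Fin N}

theorem jstar_eq_of_isGreatest (hm : IsGreatest (support (p ∘ r)) m) :
    jstar r p = m + 1 := by
  refine le_antisymm (Finset.sup_le fun j hj ↦ ?_)
    (Finset.le_sup (f := fun j : Fin N ↦ (j : ℕ) + 1) ?_)
  · have hpj : p (r j) = 1 := (Finset.mem_filter.1 hj).2
    exact Nat.succ_le_succ (hm.2 ((zmod_two_ne_zero_iff _).2 hpj))
  · exact Finset.mem_filter.2 ⟨Finset.mem_univ m, (isGreatest_support_iff.1 hm).1⟩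

theorem eq_update_iff_comp_eq_update (i : Fin N) (a : ZMod 2) :
    c = update p (r i) a ↔ c ∘ r = update (p ∘ r) i a := by
  rw [← update_comp_eq_of_injective p r.injective, r.surjective.injective_comp_right.eq_iff]

theorem child_zero_iff : Child r 0 c ↔ ∃ b, IsBot b ∧ c ∘ r = Pi.single b 1 := by
  have isBot_iff (b : Fin N) : IsBot b ↔ (b : ℕ) = 0 :=
    ⟨fun hb ↦ Nat.le_zero.1 (hb ⟨0, b.pos⟩), fun hb j ↦ Fin.le_def.2 (hb ▸ Nat.zero_le _)⟩
  simp only [Child, ne_eq, not_true_eq_false, false_and, or_false, true_and,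
    eq_update_iff_comp_eq_update, isBot_iff]
  constructor
  · rintro ⟨hN, hc⟩
    exact ⟨⟨0, hN⟩, rfl, hc⟩
  · rintro ⟨⟨_, hN⟩, rfl, hc⟩
    exact ⟨hN, hc⟩

theorem child_iff_of_isGreatest (hm : IsGreatest (support (p ∘ r)) m) :
    Child r p c ↔ ∃ l, m ⋖ l ∧
      (c ∘ r = update (update (p ∘ r) m 0) l 1 ∨ c ∘ r = update (p ∘ r) l 1) := by
  have hp : p ≠ 0 := by
    rintro rfl
    exact hm.1 rfl
  simp only [Child, hp, jstar_eq_of_isGreatest hm, ne_eq, not_false_eq_true, false_and, false_or,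
    true_and, Nat.add_sub_cancel, Fin.eta, eq_update_iff_comp_eq_update,
    update_comp_eq_of_injective p r.injective, Fin.covBy_iff, Nat.covBy_iff_add_one_eq]
  constructor
  · rintro ⟨hN, hc⟩
    exact ⟨⟨m + 1, hN⟩, rfl, hc⟩
  · rintro ⟨⟨_, hN⟩, rfl, hc⟩
    exact ⟨hN, hc⟩

theorem child_iff_positionChild : Child r p c ↔ PositionChild (p ∘ r) (c ∘ r) := by
  by_cases hp : p ∘ r = 0
  · obtain rfl : p = 0 := r.surjective.injective_comp_right hp
    simp [child_zero_iff, PositionChild, IsGreatest]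
  · obtain ⟨m, hm⟩ := exists_isGreatest_support hp
    have isGreatest_iff (m' : Fin N) : IsGreatest (support (p ∘ r)) m' ↔ m' = m :=
      ⟨fun h ↦ h.unique hm, fun h ↦ h ▸ hm⟩
    simp [child_iff_of_isGreatest hm, PositionChild, hp, isGreatest_iff]

end Permutation

/-- every nonzero `e ∈ F₂^N` is the child of exactly one vector in the
EP tree. -/
theorem stmt7 {N : ℕ} (r : Equiv.Perm (Fin N))
    (e : Fin N → ZMod 2) (he : e ≠ 0) :
    ∃! p : Fin N → ZMod 2, Child r p e := by
  have comp_bijective : Bijective fun p : Fin N → ZMod 2 ↦ p ∘ r :=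
    ⟨r.surjective.injective_comp_right, r.injective.surjective_comp_right⟩
  simpa only [child_iff_positionChild] using
    comp_bijective.existsUnique_iff.1 (stmt7_general (comp_bijective.1.ne he))
end

section
/- The EP tree is complete on F_2^N: every nonzero e ∈ F_2^N is a descendant of the root 0, i.e., every vector in F_2^N is reachable from 0 by a finite chain of child steps. -/
open scoped BigOperators

/-!
Induct on `j*(e)`. A vector with `j*(e) = 1` is the child of the root. If `j*(e) = j ≥ 2`, moving
the last one of `e` from position `j` to position `j - 1`, whether or not that position is already
occupied, gives a vector `p` with `j*(p) = j - 1`; then `e` is the right child of `p` if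
`e_{r_{j-1}} = 1`, and the left child if `e_{r_{j-1}} = 0`.
-/

theorem zmod_two_ne_one_iff {x : ZMod 2} : x ≠ 1 ↔ x = 0 := by
  decide +revert

section EPTree

variable {N : ℕ} {r : Equiv.Perm (Fin N)} {e : Fin N → ZMod 2} {i j : Fin N}

theorem jstar_le_iff {m : ℕ} : jstar r e ≤ m ↔ ∀ k : Fin N, m ≤ k → e (r k) = 0 := by
  simp only [jstar, Finset.sup_le_iff, Finset.mem_filter_univ, Nat.succ_le_iff]
  refine forall_congr' fun k ↦ ?_
  rw [← not_imp_not, not_lt, ← ne_eq, zmod_two_ne_one_iff]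

theorem jstar_le : jstar r e ≤ N :=
  jstar_le_iff.2 fun k hk ↦ absurd k.isLt hk.not_gt

theorem jstar_eq_zero_iff : jstar r e = 0 ↔ e = 0 := by
  rw [← Nat.le_zero, jstar_le_iff, funext_iff]
  simp only [Nat.zero_le, true_imp_iff, Pi.zero_apply]
  exact r.forall_congr_right (q := fun x ↦ e x = 0)

theorem ne_zero_of_jstar_eq_add_one {n : ℕ} (h : jstar r e = n + 1) : e ≠ 0 :=
  mt jstar_eq_zero_iff.2 (h.trans_ne n.succ_ne_zero)

theorem jstar_eq_add_one_iff :
    jstar r e = j + 1 ↔ e (r j) = 1 ∧ ∀ k, j < k → e (r k) = 0 := by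
  have h_le : jstar r e ≤ j + 1 ↔ ∀ k, j < k → e (r k) = 0 := jstar_le_iff
  have h_le_val : jstar r e ≤ j ↔ e (r j) = 0 ∧ ∀ k, j < k → e (r k) = 0 := by
    rw [jstar_le_iff]
    simp only [le_iff_eq_or_lt, Fin.val_inj, Fin.val_fin_lt, or_imp, forall_and, forall_eq']
  rw [Nat.eq_iff_le_and_ge, Nat.succ_le_iff, ← not_le, h_le_val, h_le, ← zmod_two_ne_one_iff]
  tauto

theorem child_zero_of_jstar_eq_one (h : jstar r e = 1) : Child r 0 e := by
  have hN : 0 < N := Nat.lt_of_succ_le (h.ge.trans jstar_le)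
  obtain ⟨h_first, h_rest⟩ := jstar_eq_add_one_iff (j := ⟨0, hN⟩).1 h
  refine .inl ⟨rfl, hN, Function.eq_update_iff.2 ⟨h_first, fun x hx ↦ ?_⟩⟩
  obtain ⟨k, rfl⟩ := r.surjective x
  exact h_rest k (Nat.pos_of_ne_zero fun hk ↦ hx (congrArg r (Fin.ext hk)))

theorem child_left (hij : (j : ℕ) = i + 1) (h : jstar r e = i + 1) :
    Child r e (Function.update (Function.update e (r i) 0) (r j) 1) := by
  refine .inr ⟨ne_zero_of_jstar_eq_add_one h, by omega, .inl ?_⟩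
  simp only [h, Nat.add_sub_cancel, Fin.eta]
  simp only [← hij, Fin.eta]

theorem child_right (hij : (j : ℕ) = i + 1) (h : jstar r e = i + 1) :
    Child r e (Function.update e (r j) 1) := by
  refine .inr ⟨ne_zero_of_jstar_eq_add_one h, by omega, .inr ?_⟩
  simp only [h, ← hij]

/-- The vector `e` with the entry at position `j` (in the order `r`) cleared and the entry at
position `i` set. If `j` is the position of the last one of `e` and `i` the position just before it,
this is a parent of `e` in the EP tree. Positions are 0-indexed, unlike the values of `jstar`. -/
def moveOne (r : Equiv.Perm (Fin N)) (j i : Fin N) (e : Fin N → ZMod 2) : Fin N → ZMod 2 :=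
  Function.update (Function.update e (r j) 0) (r i) 1

theorem jstar_moveOne (hij : (j : ℕ) = i + 1) (h : jstar r e = j + 1) :
    jstar r (moveOne r j i e) = i + 1 := by
  refine jstar_eq_add_one_iff.2 ⟨Function.update_self .., fun k hik ↦ ?_⟩
  rw [moveOne, Function.update_of_ne (r.injective.ne hik.ne')]
  obtain rfl | hkj := eq_or_ne k j
  · exact Function.update_self ..
  · rw [Function.update_of_ne (r.injective.ne hkj)]
    exact (jstar_eq_add_one_iff.1 h).2 k (by omega)

theorem child_moveOne (hij : (j : ℕ) = i + 1) (h : jstar r e = j + 1) :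
    Child r (moveOne r j i e) e := by
  have hp : jstar r (moveOne r j i e) = i + 1 := jstar_moveOne hij h
  have hej : e (r j) = 1 := (jstar_eq_add_one_iff.1 h).1
  have hne : r j ≠ r i := r.injective.ne (by omega)
  by_cases hei : e (r i) = 1
  · have h_right : Function.update (moveOne r j i e) (r j) 1 = e := by
      rw [moveOne, Function.update_comm hne, Function.update_idem, ← hei, Function.update_eq_self,
        hei, ← hej, Function.update_eq_self]
    simpa only [h_right] using child_right hij hp
  · have h_left : Function.update (Function.update (moveOne r j i e) (r i) 0) (r j) 1 = e := by
      rw [moveOne, Function.update_idem, Function.update_comm hne, Function.update_idem,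
        ← zmod_two_ne_one_iff.1 hei, Function.update_eq_self, ← hej, Function.update_eq_self]
    simpa only [h_left] using child_left hij hp

theorem transGen_child_zero_of_jstar_eq_add_one {n : ℕ} (h : jstar r e = n + 1) :
    Relation.TransGen (Child r) 0 e := by
  induction n generalizing e with
  | zero => exact .single (child_zero_of_jstar_eq_one h)
  | succ n ih =>
    have hn : n + 1 < N := Nat.lt_of_succ_le (h.ge.trans jstar_le)
    let i : Fin N := ⟨n, by omega⟩
    let j : Fin N := ⟨n + 1, hn⟩
    have hij : (j : ℕ) = i + 1 := rfl
    exact .tail (ih (jstar_moveOne hij h)) (child_moveOne hij h)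

end EPTree

/-- the EP tree is complete on `F₂^N`: every nonzero `e` is a descendant
of the root `0`, i.e. reachable from `0` by a finite chain of child steps. -/
theorem stmt8 {N : ℕ} (hN : 0 < N) (r : Equiv.Perm (Fin N))
    (e : Fin N → ZMod 2) (he : e ≠ 0) :
    Relation.TransGen (Child r) 0 e := by
  obtain ⟨n, hn⟩ := Nat.exists_eq_add_one_of_ne_zero (mt jstar_eq_zero_iff.1 he)
  exact transGen_child_zero_of_jstar_eq_add_one hn
end
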